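/- arXiv:2511.07259 — 2 statements merged into one kernel-verified Lean document; each statement's English description precedes it below -/
import Mathlib

section
/- Let v₁, v₂, v₃ ∈ ℝ² be affinely independent with barycentric coordinates λᵢ (λᵢ(vⱼ) = δᵢⱼ), let γⱼ(t) = ((1+t)/2) v_{j+1} + ((1-t)/2) v_{j+2} (indices modulo 3), and fix μ ≥ 1, σ > 0. Then for all i, j ∈ {1,2,3}: ∫_{-1}^{1} p_{σ,μ}(t) λᵢ(γⱼ(t))² k̃_{σ,μ}(t) dt = (‖p_{σ,μ}‖²_{2,σ,μ}/4)(1 - δᵢⱼ), where ‖p_{σ,μ}‖²_{2,σ,μ} = ∫_{-1}^{1} p_{σ,μ}(t)² k̃_{σ,μ}(t) dt. -/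
open MeasureTheory

/-- Lower incomplete gamma function `γ(s,z) = ∫₀^z u^(s-1) e^(-u) du`. -/
noncomputable def lowGamma (s z : ℝ) : ℝ := ∫ u in (0:ℝ)..z, u ^ (s - 1) * Real.exp (-u)

/-- Modified lower incomplete gamma function `γ^mod(s,z) = γ(s,z)/z^s`. -/
noncomputable def gammaMod (s z : ℝ) : ℝ := lowGamma s z / z ^ s

/-- First family of densities `k̃_{σ,μ}` on `[-1,1]`. -/
noncomputable def kTilde (σ μ t : ℝ) : ℝ :=
  (μ / gammaMod ((4 * μ - 3) / (2 * μ)) (1 / (2 * σ ^ (2 * μ)))) *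
    (t ^ 2) ^ (2 * μ - 2) * Real.exp (-(1 / 2) * (t ^ 2 / σ ^ 2) ^ μ)

/-- Second moment `t_{2,σ,μ}` of `k̃_{σ,μ}`. -/
noncomputable def tMom2 (σ μ : ℝ) : ℝ := ∫ t in (-1:ℝ)..1, t ^ 2 * kTilde σ μ t

/-- The orthogonal quadratic polynomial `p_{σ,μ}(t) = t² - t_{2,σ,μ}`. -/
noncomputable def pPoly (σ μ t : ℝ) : ℝ := t ^ 2 - tMom2 σ μ

/-- Parametrization of the edge `s_j` of the triangle, opposite to the vertex `v j`
(indices taken cyclically in `Fin 3`). -/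
noncomputable def edgeParam (v : Fin 3 → ℝ × ℝ) (j : Fin 3) (t : ℝ) : ℝ × ℝ :=
  ((1 + t) / 2) • v (j + 1) + ((1 - t) / 2) • v (j + 2)


noncomputable def hAux (σ μ t : ℝ) : ℝ :=
  (t ^ 2) ^ (2 * μ - 2) * Real.exp (-(1 / 2) * (t ^ 2 / σ ^ 2) ^ μ)

theorem hAux_cont (σ μ : ℝ) (hμ : 1 ≤ μ) : Continuous (hAux σ μ) := by
  unfold hAux
  refine Continuous.mul ?_ (Real.continuous_exp.comp (continuous_const.mul ?_))
  · exact (continuous_id.pow 2).rpow_const (fun _ => Or.inr (by linarith))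
  · exact ((continuous_id.pow 2).div_const _).rpow_const (fun _ => Or.inr (by linarith))

theorem hAux_even (σ μ t : ℝ) : hAux σ μ (-t) = hAux σ μ t := by simp [hAux]

theorem hAux_pos (σ μ t : ℝ) (ht : 0 < t) : 0 < hAux σ μ t := by
  unfold hAux; positivity

theorem odd_int (f : ℝ → ℝ) (hf : ∀ t, f (-t) = - f t) : ∫ t in (-1:ℝ)..1, f t = 0 := by
  have h := intervalIntegral.integral_comp_neg (a := -1) (b := 1) f
  simp only [hf, neg_neg, intervalIntegral.integral_neg] at h
  linarith

theorem hAux_lowGamma (σ μ : ℝ) (hσ : 0 < σ) (hμ : 1 ≤ μ) :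
    (2 * μ * (1 / (2 * σ ^ (2 * μ))) ^ ((4 * μ - 3) / (2 * μ))) * ∫ t in (0:ℝ)..1, hAux σ μ t
      = lowGamma ((4 * μ - 3) / (2 * μ)) (1 / (2 * σ ^ (2 * μ))) := by
  set s := (4 * μ - 3) / (2 * μ) with hs
  set z := 1 / (2 * σ ^ (2 * μ)) with hz
  have hzp : 0 < z := by positivity
  have hs1 : -1 < s - 1 := by
    have : 0 < s := div_pos (by linarith) (by linarith)
    linarith
  have hpt : ∀ t ∈ Set.Ioc (0:ℝ) 1,
      ((fun u => u ^ (s - 1) * Real.exp (-u)) ∘ fun t => z * t ^ (2 * μ)) t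
        * (z * (2 * μ * t ^ (2 * μ - 1))) = (2 * μ * z ^ s) * hAux σ μ t := by
    intro t ht
    have ht0 := ht.1
    have e1 : (t ^ 2) ^ (2 * μ - 2) = t ^ (4 * μ - 4) := by
      rw [← Real.rpow_natCast, ← Real.rpow_mul ht0.le]; congr 1; push_cast; ring
    have e2 : (-(1 / 2) * (t ^ 2 / σ ^ 2) ^ μ) = -(z * t ^ (2 * μ)) := by
      rw [Real.div_rpow (by positivity) (by positivity), ← Real.rpow_natCast,
        ← Real.rpow_natCast, ← Real.rpow_mul ht0.le, ← Real.rpow_mul hσ.le, hz]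
      push_cast
      field_simp
    have e3 : (z * t ^ (2 * μ)) ^ (s - 1) * z * t ^ (2 * μ - 1) = z ^ s * t ^ (4 * μ - 4) := by
      have : (4 * μ - 4) = 2 * μ * (s - 1) + (2 * μ - 1) := by
        rw [hs]; field_simp; ring
      rw [Real.mul_rpow hzp.le (by positivity), ← Real.rpow_mul ht0.le, this,
        Real.rpow_add ht0, Real.rpow_sub_one hzp.ne']
      field_simp
    simp only [Function.comp, hAux, e1, e2]
    linear_combination (2 * μ * Real.exp (-(z * t ^ (2 * μ)))) * e3
  have him : (fun t : ℝ => z * t ^ (2 * μ)) '' Set.uIcc 0 1 ⊆ Set.Icc 0 z := by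
    rintro _ ⟨t, ht, rfl⟩
    rw [Set.uIcc_of_le zero_le_one] at ht
    have h1 : t ^ (2 * μ) ≤ 1 := Real.rpow_le_one ht.1 ht.2 (by linarith)
    have h0 : 0 ≤ t ^ (2 * μ) := Real.rpow_nonneg ht.1 _
    exact ⟨by positivity, by nlinarith⟩
  have key := intervalIntegral.integral_comp_mul_deriv''' (a := 0) (b := 1)
    (f := fun t : ℝ => z * t ^ (2 * μ)) (f' := fun t => z * (2 * μ * t ^ (2 * μ - 1)))
    (g := fun u => u ^ (s - 1) * Real.exp (-u)) ?_ ?_ ?_ ?_ ?_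
  · unfold lowGamma
    rw [Real.one_rpow, Real.zero_rpow (by linarith), mul_zero, mul_one] at key
    rw [← key, ← intervalIntegral.integral_const_mul]
    refine intervalIntegral.integral_congr_ae (Filter.Eventually.of_forall ?_)
    intro t ht
    rw [Set.uIoc_of_le zero_le_one] at ht
    exact (hpt t ht).symm
  · exact (continuous_const.mul
      (continuous_id.rpow_const (fun _ => Or.inr (by linarith)))).continuousOn
  · intro t ht
    simp only [min_eq_left zero_le_one, zero_le_one, inf_of_le_left, sup_of_le_right] at ht
    exact ((Real.hasDerivAt_rpow_const (Or.inl ht.1.ne')).const_mul z).hasDerivWithinAt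
  · rintro _ ⟨t, ht, rfl⟩
    simp only [zero_le_one, inf_of_le_left, sup_of_le_right] at ht
    have := Real.rpow_pos_of_pos ht.1 (2 * μ)
    refine ContinuousAt.continuousWithinAt ?_
    refine ContinuousAt.mul (Real.continuousAt_rpow_const _ _ (Or.inl (by positivity))) ?_
    fun_prop
  · refine IntegrableOn.mono_set ?_ him
    rw [← Set.uIcc_of_le hzp.le, ← intervalIntegrable_iff']
    exact (intervalIntegral.intervalIntegrable_rpow' hs1).mul_continuousOn (by fun_prop)
  · rw [← intervalIntegrable_iff']
    have : IntervalIntegrable (fun t => (2 * μ * z ^ s) * hAux σ μ t) volume 0 1 :=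
      ((hAux_cont σ μ hμ).const_mul _).intervalIntegrable _ _
    refine this.congr_ae ?_
    rw [Set.uIoc_of_le zero_le_one]
    filter_upwards [ae_restrict_mem measurableSet_Ioc] with t ht
    exact (hpt t ht).symm

theorem kTilde_eq (σ μ : ℝ) : kTilde σ μ = fun t =>
    (μ / gammaMod ((4 * μ - 3) / (2 * μ)) (1 / (2 * σ ^ (2 * μ)))) * hAux σ μ t := by
  funext t; simp only [kTilde, hAux]; ring

theorem kTilde_int (σ μ : ℝ) (hσ : 0 < σ) (hμ : 1 ≤ μ) :
    ∫ t in (-1:ℝ)..1, kTilde σ μ t = 1 := by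
  have hc := hAux_cont σ μ hμ
  have hpos : 0 < ∫ t in (0:ℝ)..1, hAux σ μ t :=
    intervalIntegral.intervalIntegral_pos_of_pos_on (hc.intervalIntegrable _ _)
      (fun t ht => hAux_pos σ μ t ht.1) one_pos
  have h2 : ∫ t in (-1:ℝ)..1, hAux σ μ t = 2 * ∫ t in (0:ℝ)..1, hAux σ μ t := by
    rw [← intervalIntegral.integral_add_adjacent_intervals
      (hc.intervalIntegrable (-1) 0) (hc.intervalIntegrable 0 1)]
    have h := intervalIntegral.integral_comp_neg (a := 0) (b := 1) (hAux σ μ)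
    simp only [hAux_even, neg_zero] at h
    rw [← h]; ring
  have hz : 0 < (1 / (2 * σ ^ (2 * μ))) ^ ((4 * μ - 3) / (2 * μ)) := by positivity
  rw [kTilde_eq]
  simp only [gammaMod]
  rw [intervalIntegral.integral_const_mul, h2, ← hAux_lowGamma σ μ hσ hμ]
  have hm : μ ≠ 0 := by linarith
  have := hz.ne'
  have := hpos.ne'
  generalize (1 / (2 * σ ^ (2 * μ))) ^ ((4 * μ - 3) / (2 * μ)) = Z at *
  field_simp

theorem main_aux (σ μ : ℝ) (hσ : 0 < σ) (hμ : 1 ≤ μ) (e : ℝ) (he : e ^ 2 = 1) :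
    ∫ t in (-1:ℝ)..1, pPoly σ μ t * ((1 + e * t) / 2) ^ 2 * kTilde σ μ t
      = (∫ t in (-1:ℝ)..1, (pPoly σ μ t) ^ 2 * kTilde σ μ t) / 4 := by
  have hk : Continuous (kTilde σ μ) := by
    rw [kTilde_eq]; exact (hAux_cont σ μ hμ).const_mul _
  have hke : ∀ t, kTilde σ μ (-t) = kTilde σ μ t := by
    intro t; simp [kTilde]
  have hp : Continuous (pPoly σ μ) := by unfold pPoly; fun_prop
  have h0 : ∫ t in (-1:ℝ)..1, pPoly σ μ t * kTilde σ μ t = 0 := by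
    simp only [pPoly, sub_mul]
    rw [intervalIntegral.integral_sub
      ((by fun_prop : Continuous fun t => t ^ 2 * kTilde σ μ t).intervalIntegrable _ _)
      ((by fun_prop : Continuous fun t => tMom2 σ μ * kTilde σ μ t).intervalIntegrable _ _),
      intervalIntegral.integral_const_mul, kTilde_int σ μ hσ hμ, ← tMom2]
    ring
  have h1 : ∫ t in (-1:ℝ)..1, pPoly σ μ t * t * kTilde σ μ t = 0 := by
    apply odd_int
    intro t; simp [hke, pPoly]
  have hsplit : ∀ t, pPoly σ μ t * ((1 + e * t) / 2) ^ 2 * kTilde σ μ t =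
      (1 / 4) * ((pPoly σ μ t) ^ 2 * kTilde σ μ t) +
      (((1 + tMom2 σ μ) / 4) * (pPoly σ μ t * kTilde σ μ t) +
      (e / 2) * (pPoly σ μ t * t * kTilde σ μ t)) := by
    intro t; simp only [pPoly]
    linear_combination ((t ^ 2 - tMom2 σ μ) * t ^ 2 / 4 * kTilde σ μ t) * he
  simp only [hsplit]
  rw [intervalIntegral.integral_add
      ((by fun_prop : Continuous _).intervalIntegrable _ _)
      ((by fun_prop : Continuous _).intervalIntegrable _ _),
    intervalIntegral.integral_add
      ((by fun_prop : Continuous _).intervalIntegrable _ _)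
      ((by fun_prop : Continuous _).intervalIntegrable _ _),
    intervalIntegral.integral_const_mul, intervalIntegral.integral_const_mul,
    intervalIntegral.integral_const_mul, h0, h1]
  ring

/-- `∫_{-1}^{1} p_{σ,μ}(t) λᵢ(γⱼ(t))² k̃_{σ,μ}(t) dt = (‖p_{σ,μ}‖²_{2,σ,μ}/4)(1 - δᵢⱼ)`. -/
theorem integral_pPoly_bary_sq_edge (v : Fin 3 → ℝ × ℝ) (hv : AffineIndependent ℝ v)
    (lam : Fin 3 → ℝ × ℝ → ℝ)
    (hlam : ∀ i, ∃ A : (ℝ × ℝ) →ᵃ[ℝ] ℝ, ∀ x, lam i x = A x)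
    (hkr : ∀ i j, lam i (v j) = if i = j then (1:ℝ) else 0)
    (σ μ : ℝ) (hσ : 0 < σ) (hμ : 1 ≤ μ)
    (i j : Fin 3) :
    ∫ t in (-1:ℝ)..1, pPoly σ μ t * (lam i (edgeParam v j t)) ^ 2 * kTilde σ μ t
      = ((∫ t in (-1:ℝ)..1, (pPoly σ μ t) ^ 2 * kTilde σ μ t) / 4)
          * (1 - if i = j then (1:ℝ) else 0) := by
  obtain ⟨A, hA⟩ := hlam i
  have hl : ∀ t, lam i (edgeParam v j t) =
      (1 + t) / 2 * lam i (v (j + 1)) + (1 - t) / 2 * lam i (v (j + 2)) := by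
    intro t
    have h : edgeParam v j t = AffineMap.lineMap (v (j + 2)) (v (j + 1)) ((1 + t) / 2) := by
      rw [AffineMap.lineMap_apply_module, edgeParam, add_comm]
      congr 2
      ring
    rw [h, hA, AffineMap.apply_lineMap, AffineMap.lineMap_apply_module, ← hA, ← hA]
    simp only [smul_eq_mul]
    ring
  simp only [hl, hkr]
  have hP := main_aux σ μ hσ hμ 1 (by norm_num)
  have hM := main_aux σ μ hσ hμ (-1) (by norm_num)
  have hj : i = j ∨ i = j + 1 ∨ i = j + 2 := by
    exact (by decide : ∀ i j : Fin 3, i = j ∨ i = j + 1 ∨ i = j + 2) i j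
  have n1 : j ≠ j + 1 := (by decide : ∀ j : Fin 3, j ≠ j + 1) j
  have n2 : j ≠ j + 2 := (by decide : ∀ j : Fin 3, j ≠ j + 2) j
  have n3 : j + 1 ≠ j + 2 := (by decide : ∀ j : Fin 3, j + 1 ≠ j + 2) j
  rcases hj with rfl | rfl | rfl
  · simp only [if_neg n1, if_neg n2, if_true]
    simp
  · simp only [if_neg n3, if_neg n1.symm, if_true]
    simpa using hP
  · simp only [if_neg n3.symm, if_neg n2.symm, if_true]
    simpa [sub_eq_add_neg] using hM
end

section
/- Unisolvency of the first enriched triple: let v₁, v₂, v₃ ∈ ℝ² be affinely independent with barycentric coordinates λᵢ, let γⱼ(t) = ((1+t)/2) v_{j+1} + ((1-t)/2) v_{j+2} (indices modulo 3), and fix μ ≥ 1, σ > 0. Define, for f : ℝ² → ℝ, the six functionals I_j(f) = ∫_{-1}^{1} f(γⱼ(t)) k̃_{σ,μ}(t) dt and L_j(f) = ∫_{-1}^{1} p_{σ,μ}(t) f(γⱼ(t)) k̃_{σ,μ}(t) dt, j = 1,2,3. If p₂ = Σᵢ₌₁³ aᵢ λᵢ + Σᵢ₌₁³ bᵢ λᵢ²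 with real coefficients aᵢ, bᵢ satisfies I_j(p₂) = 0 and L_j(p₂) = 0 for j = 1,2,3, then a₁ = a₂ = a₃ = b₁ = b₂ = b₃ = 0, and hence p₂ is the zero function. -/
open MeasureTheory

theorem core_aux (k : ℝ → ℝ) (hk : Continuous k) (hev : ∀ t, k (-t) = k t)
    (hpos : ∀ t, t ≠ 0 → 0 < k t) (hk0 : ∀ t, 0 ≤ k t) (c0 c1 c2 M : ℝ)
    (h1 : ∫ t in (-1:ℝ)..1, (c0 + c1 * t + c2 * t ^ 2) * k t = 0)
    (h2 : ∫ t in (-1:ℝ)..1, (t ^ 2 - M) * (c0 + c1 * t + c2 * t ^ 2) * k t = 0) :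
    c0 = 0 ∧ c2 = 0 := by
  have key : ∫ t in (-1:ℝ)..1,
      (c0 + c2 * t ^ 2) * ((c0 + c1 * t + c2 * t ^ 2) * k t) = 0 := by
    have e : ∀ t : ℝ, (c0 + c2 * t ^ 2) * ((c0 + c1 * t + c2 * t ^ 2) * k t)
        = (c0 + c2 * M) * ((c0 + c1 * t + c2 * t ^ 2) * k t)
          + c2 * ((t ^ 2 - M) * (c0 + c1 * t + c2 * t ^ 2) * k t) := by
      intro t; ring
    simp_rw [e]
    rw [intervalIntegral.integral_add, intervalIntegral.integral_const_mul,
      intervalIntegral.integral_const_mul, h1, h2]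
    · simp
    · exact Continuous.intervalIntegrable (by fun_prop) _ _
    · exact Continuous.intervalIntegrable (by fun_prop) _ _
  have key2 : ∫ t in (-1:ℝ)..1,
      (c0 + c2 * t ^ 2) * ((c0 - c1 * t + c2 * t ^ 2) * k t) = 0 := by
    have h := intervalIntegral.integral_comp_neg (a := -1) (b := 1)
      (fun t : ℝ => (c0 + c2 * t ^ 2) * ((c0 + c1 * t + c2 * t ^ 2) * k t))
    simp only [neg_neg] at h
    rw [key] at h
    rw [← h]
    congr 1
    ext t
    rw [hev]
    ring
  have key3 : ∫ t in (-1:ℝ)..1, (c0 + c2 * t ^ 2) ^ 2 * k t = 0 := by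
    have e : ∀ t : ℝ, (c0 + c2 * t ^ 2) ^ 2 * k t
        = (1 / 2) * ((c0 + c2 * t ^ 2) * ((c0 + c1 * t + c2 * t ^ 2) * k t))
          + (1 / 2) * ((c0 + c2 * t ^ 2) * ((c0 - c1 * t + c2 * t ^ 2) * k t)) := by
      intro t; ring
    simp_rw [e]
    rw [intervalIntegral.integral_add, intervalIntegral.integral_const_mul,
      intervalIntegral.integral_const_mul, key, key2]
    · simp
    · exact Continuous.intervalIntegrable (by fun_prop) _ _
    · exact Continuous.intervalIntegrable (by fun_prop) _ _
  have z : ∀ c ∈ Set.Icc (-1:ℝ) 1, c ≠ 0 → c0 + c2 * c ^ 2 = 0 := by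
    intro c hc hne
    by_contra hn
    have := intervalIntegral.integral_pos (a := (-1:ℝ)) (b := 1)
      (f := fun t => (c0 + c2 * t ^ 2) ^ 2 * k t) (by norm_num)
      (Continuous.continuousOn (by fun_prop))
      (fun x _ => mul_nonneg (sq_nonneg _) (hk0 x))
      ⟨c, hc, mul_pos (by positivity) (hpos c hne)⟩
    linarith
  have z1 := z 1 (by norm_num) (by norm_num)
  have z2 := z (1/2) (by norm_num [Set.mem_Icc]) (by norm_num)
  constructor <;> linarith

theorem gammaMod_pos (s z : ℝ) (hs : 0 < s) (hz : 0 < z) : 0 < gammaMod s z := by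
  unfold gammaMod lowGamma
  apply div_pos _ (Real.rpow_pos_of_pos hz s)
  apply intervalIntegral.intervalIntegral_pos_of_pos_on _ _ hz
  · apply IntervalIntegrable.mul_continuousOn
    · exact intervalIntegral.intervalIntegrable_rpow' (by linarith)
    · exact Continuous.continuousOn (by fun_prop)
  · intro x hx
    exact mul_pos (Real.rpow_pos_of_pos hx.1 _) (Real.exp_pos _)

theorem kTilde_const_pos (σ μ : ℝ) (hσ : 0 < σ) (hμ : 1 ≤ μ) :
    0 < μ / gammaMod ((4 * μ - 3) / (2 * μ)) (1 / (2 * σ ^ (2 * μ))) := by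
  have := Real.rpow_pos_of_pos hσ (2 * μ)
  exact div_pos (by linarith) (gammaMod_pos _ _ (div_pos (by linarith) (by linarith))
    (by positivity))

theorem kTilde_cont (σ μ : ℝ) (hμ : 1 ≤ μ) : Continuous (kTilde σ μ) := by
  unfold kTilde
  have h1 : Continuous fun t : ℝ => (t ^ 2) ^ (2 * μ - 2) :=
    (continuous_pow 2).rpow_const (fun _ => Or.inr (by linarith))
  have h2 : Continuous fun t : ℝ => (t ^ 2 / σ ^ 2) ^ μ :=
    ((continuous_pow 2).div_const _).rpow_const (fun _ => Or.inr (by linarith))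
  fun_prop

theorem edge_aux (v : Fin 3 → ℝ × ℝ)
    (lam : Fin 3 → ℝ × ℝ → ℝ)
    (hlam : ∀ i, ∃ A : (ℝ × ℝ) →ᵃ[ℝ] ℝ, ∀ x, lam i x = A x) (i j : Fin 3) (t : ℝ) :
    lam i (edgeParam v j t)
      = (1 + t) / 2 * lam i (v (j + 1)) + (1 - t) / 2 * lam i (v (j + 2)) := by
  obtain ⟨A, hA⟩ := hlam i
  have e : edgeParam v j t = AffineMap.lineMap (v (j + 2)) (v (j + 1)) ((1 + t) / 2) := by
    rw [AffineMap.lineMap_apply_module, edgeParam, add_comm]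
    congr 2
    ring
  rw [hA, hA, hA, e, AffineMap.apply_lineMap, AffineMap.lineMap_apply_module]
  simp only [smul_eq_mul]
  ring

/-- Unisolvency of the first enriched triple: if a quadratic
`p₂ = Σ aᵢ λᵢ + Σ bᵢ λᵢ²` is annihilated by all the six enriched edge functionals,
then all its coefficients vanish and `p₂ = 0`. -/
theorem unisolvent_first_family (v : Fin 3 → ℝ × ℝ) (hv : AffineIndependent ℝ v)
    (lam : Fin 3 → ℝ × ℝ → ℝ)
    (hlam : ∀ i, ∃ A : (ℝ × ℝ) →ᵃ[ℝ] ℝ, ∀ x, lam i x = A x)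
    (hkr : ∀ i j, lam i (v j) = if i = j then (1:ℝ) else 0)
    (σ μ : ℝ) (hσ : 0 < σ) (hμ : 1 ≤ μ)
    (a b : Fin 3 → ℝ)
    (hI : ∀ j : Fin 3,
      ∫ t in (-1:ℝ)..1,
        ((∑ i : Fin 3, a i * lam i (edgeParam v j t))
          + ∑ i : Fin 3, b i * (lam i (edgeParam v j t)) ^ 2) * kTilde σ μ t = 0)
    (hL : ∀ j : Fin 3,
      ∫ t in (-1:ℝ)..1,
        pPoly σ μ t *
          ((∑ i : Fin 3, a i * lam i (edgeParam v j t))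
            + ∑ i : Fin 3, b i * (lam i (edgeParam v j t)) ^ 2) * kTilde σ μ t = 0) :
    (∀ i, a i = 0) ∧ (∀ i, b i = 0) ∧
      ∀ x : ℝ × ℝ, (∑ i : Fin 3, a i * lam i x) + ∑ i : Fin 3, b i * (lam i x) ^ 2 = 0 := by
  have hC := kTilde_const_pos σ μ hσ hμ
  have hkc := kTilde_cont σ μ hμ
  have hev : ∀ t, kTilde σ μ (-t) = kTilde σ μ t := by
    intro t; simp [kTilde]
  have hpos : ∀ t, t ≠ 0 → 0 < kTilde σ μ t := by
    intro t ht
    unfold kTilde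
    have : 0 < t ^ 2 := by positivity
    exact mul_pos (mul_pos hC (Real.rpow_pos_of_pos this _)) (Real.exp_pos _)
  have hk0 : ∀ t, 0 ≤ kTilde σ μ t := by
    intro t
    unfold kTilde
    exact mul_nonneg (mul_nonneg hC.le (Real.rpow_nonneg (sq_nonneg t) _)) (Real.exp_pos _).le
  have main : ∀ j : Fin 3, a (j + 1) + a (j + 2) = 0 ∧ b (j + 1) + b (j + 2) = 0 := by
    intro j
    have ef : ∀ t, ((∑ i : Fin 3, a i * lam i (edgeParam v j t))
          + ∑ i : Fin 3, b i * (lam i (edgeParam v j t)) ^ 2)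
        = ((a (j + 1) + a (j + 2)) / 2 + (b (j + 1) + b (j + 2)) / 4)
          + ((a (j + 1) - a (j + 2)) / 2 + (b (j + 1) - b (j + 2)) / 2) * t
          + (b (j + 1) + b (j + 2)) / 4 * t ^ 2 := by
      intro t
      simp only [edge_aux v lam hlam, hkr, Fin.sum_univ_three]
      fin_cases j <;> simp <;> ring
    have h1 := hI j
    have h2 := hL j
    simp only [ef, pPoly] at h1 h2
    obtain ⟨h3, h4⟩ := core_aux _ hkc hev hpos hk0 _ _ _ _ h1 h2
    constructor <;> linarith
  have m0 := main 0
  have m1 := main 1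
  have m2 := main 2
  simp only [Fin.isValue, Fin.reduceAdd] at m0 m1 m2
  have ha : ∀ i, a i = 0 := by
    intro i; fin_cases i <;> simp <;> linarith [m0.1, m1.1, m2.1]
  have hb : ∀ i, b i = 0 := by
    intro i; fin_cases i <;> simp <;> linarith [m0.2, m1.2, m2.2]
  exact ⟨ha, hb, fun x => by simp [ha, hb]⟩
end
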